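/- arXiv:1710.01985 — 2 statements merged into one kernel-verified Lean document; each statement's English description precedes it below -/
import Mathlib

section
/- Let n, Π be positive integers with Π dividing n, let A be a fixed n×n real matrix, and let Cart(A) be a Cartesian sketch of A. Then for any fixed bucket (h, g) ∈ {1,…,Π}², the bucket value Cart(A)_{h,g} has expectation 0 and variance at most ‖A‖_F²/Π². -/
open ProbabilityTheory MeasureTheory
open scoped ENNReal

/-- A function `f : Fin n → Fin K` is an equipartition if every fiber has
cardinality exactly `n / K`. -/
def IsEquip (n K : ℕ) (f : Fin n → Fin K) : Prop :=
  ∀ b : Fin K, (Finset.univ.filter fun a => f a = b).card = n / K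

/-- The `(h, g)` bucket of the Cartesian sketch of the matrix `A`, as a function of the
outcome `ω = (P₁, P₂, s₁, s₂)`:
`Cart(A)_{h,g} = ∑_{P₁ x = h} ∑_{P₂ y = g} s₁ x · s₂ y · A x y`. -/
def cartEntry (n K : ℕ) (A : Matrix (Fin n) (Fin n) ℝ) (h g : Fin K)
    (ω : (Fin n → Fin K) × (Fin n → Fin K) × (Fin n → ℝ) × (Fin n → ℝ)) : ℝ :=
  ∑ x, ∑ y, if ω.1 x = h ∧ ω.2.1 y = g then ω.2.2.1 x * ω.2.2.2 y * A x y else 0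

/-- The joint law of `(P₁, P₂, s₁, s₂)`: `P₁, P₂` are independent uniform random
equipartitions, and `s₁, s₂` are random sign functions with laws `σ₁, σ₂`, all four
mutually independent. -/
noncomputable def sketchMeasure (n K : ℕ) (σ₁ σ₂ : Measure (Fin n → ℝ)) :
    Measure ((Fin n → Fin K) × (Fin n → Fin K) × (Fin n → ℝ) × (Fin n → ℝ)) :=
  (uniformOn {f | IsEquip n K f}).prod
    ((uniformOn {f | IsEquip n K f}).prod (σ₁.prod σ₂))

/-- Equipartitions exist as soon as the number of classes divides the number of points. -/
lemma exists_isEquip {n K : ℕ} (hK : 0 < K) (hdvd : K ∣ n) : ∃ f, IsEquip n K f := by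
  obtain ⟨m, rfl⟩ := hdvd
  refine ⟨fun a => (finProdFinEquiv.symm a).1, fun b => ?_⟩
  rw [Nat.mul_div_cancel_left _ hK]
  have himage : (Finset.univ.filter fun a : Fin (K * m) => (finProdFinEquiv.symm a).1 = b) =
      Finset.univ.map ⟨fun c : Fin m => finProdFinEquiv (b, c),
        fun c d hcd => (Prod.ext_iff.1 (finProdFinEquiv.injective hcd)).2⟩ := by
    ext a
    simp only [Finset.mem_filter, Finset.mem_univ, true_and, Finset.mem_map]
    constructor
    · rintro rfl
      exact ⟨(finProdFinEquiv.symm a).2, finProdFinEquiv.apply_symm_apply a⟩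
    · rintro ⟨c, rfl⟩
      exact congrArg Prod.fst (finProdFinEquiv.symm_apply_apply (b, c))
  rw [himage, Finset.card_map, Finset.card_univ, Fintype.card_fin]

/-- Relabelling the classes of an equipartition gives an equipartition. -/
lemma IsEquip.perm_comp {n K : ℕ} {f : Fin n → Fin K} (hf : IsEquip n K f)
    (e : Equiv.Perm (Fin K)) : IsEquip n K (e ∘ f) := by
  intro b
  simpa [Equiv.eq_symm_apply] using hf (e.symm b)

lemma isProbabilityMeasure_uniformOn_isEquip {n K : ℕ} (hK : 0 < K) (hdvd : K ∣ n) :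
    IsProbabilityMeasure (uniformOn {f | IsEquip n K f}) :=
  isProbabilityMeasure_uniformOn (Set.toFinite _) (exists_isEquip hK hdvd)

/-- Under a uniform random equipartition all classes contain a given point with the same
probability. -/
lemma uniformOn_isEquip_apply_eq (n K : ℕ) (x : Fin n) (h h' : Fin K) :
    uniformOn {f | IsEquip n K f} {f | f x = h} =
      uniformOn {f | IsEquip n K f} {f | f x = h'} := by
  have hinj : Function.Injective fun f : Fin n → Fin K => Equiv.swap h h' ∘ f :=
    (Equiv.swap h h').injective.comp_left
  have himage : (fun f : Fin n → Fin K => Equiv.swap h h' ∘ f) ''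
      ({f | IsEquip n K f} ∩ {f | f x = h}) = {f | IsEquip n K f} ∩ {f | f x = h'} := by
    ext f
    constructor
    · rintro ⟨f, ⟨hf, hx⟩, rfl⟩
      refine ⟨hf.perm_comp _, ?_⟩
      simp only [Set.mem_ofPred_eq] at hx
      simp [hx]
    · rintro ⟨hf, hx⟩
      simp only [Set.mem_ofPred_eq] at hx
      refine ⟨Equiv.swap h h' ∘ f, ⟨hf.perm_comp _, by simp [hx]⟩, ?_⟩
      ext a
      simp
  have hcount : Measure.count ({f | IsEquip n K f} ∩ {f | f x = h}) =
      Measure.count ({f | IsEquip n K f} ∩ {f | f x = h'}) := by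
    rw [← himage, Measure.count_apply (Set.toFinite _).measurableSet,
      Measure.count_apply (Set.toFinite _).measurableSet, hinj.encard_image]
  rw [uniformOn, cond_apply (Set.toFinite _).measurableSet,
    cond_apply (Set.toFinite _).measurableSet, hcount]

/-- A uniform random equipartition puts a given point in a given class with probability `1 / K`. -/
lemma integral_uniformOn_isEquip {n K : ℕ} (hK : 0 < K) (hdvd : K ∣ n) (x : Fin n) (h : Fin K) :
    ∫ f, (if f x = h then (1 : ℝ) else 0) ∂(uniformOn {f | IsEquip n K f}) = 1 / K := by
  have := isProbabilityMeasure_uniformOn_isEquip hK hdvd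
  have hreal (b : Fin K) : ∫ f, (if f x = b then (1 : ℝ) else 0) ∂(uniformOn {f | IsEquip n K f}) =
      (uniformOn {f | IsEquip n K f}).real {f | f x = b} := by
    rw [← integral_indicator_one (Set.toFinite _).measurableSet]
    simp [Set.indicator_apply]
  have hsum : ∑ b : Fin K,
      ∫ f, (if f x = b then (1 : ℝ) else 0) ∂(uniformOn {f | IsEquip n K f}) = 1 := by
    rw [← integral_finsetSum _ fun _ _ => Integrable.of_finite]
    simp
  have hconst (b : Fin K) : ∫ f, (if f x = b then (1 : ℝ) else 0) ∂(uniformOn {f | IsEquip n K f}) =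
      ∫ f, (if f x = h then (1 : ℝ) else 0) ∂(uniformOn {f | IsEquip n K f}) := by
    rw [hreal, hreal, measureReal_def, measureReal_def, uniformOn_isEquip_apply_eq n K x b h]
  simp only [hconst, Finset.sum_const, Finset.card_univ, Fintype.card_fin, nsmul_eq_mul] at hsum
  have hK' : (K : ℝ) ≠ 0 := by positivity
  rw [eq_div_iff hK', mul_comm]
  exact hsum

section Signs

variable {ι : Type*} {σ : Measure (ι → ℝ)}

lemma measurableSet_apply_eq (i : ι) (a : ℝ) : MeasurableSet {s : ι → ℝ | s i = a} :=
  measurableSet_eq_fun (measurable_pi_apply i) measurable_const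

lemma integrable_sign [IsFiniteMeasure σ]
    (hval : ∀ᵐ s ∂σ, ∀ i, s i = 1 ∨ s i = -1) (i : ι) :
    Integrable (fun s : ι → ℝ => s i) σ := by
  refine Integrable.of_bound (measurable_pi_apply i).aestronglyMeasurable 1 ?_
  filter_upwards [hval] with s hs
  rcases hs i with h | h <;> simp [h]

lemma integrable_sign_mul [IsFiniteMeasure σ]
    (hval : ∀ᵐ s ∂σ, ∀ i, s i = 1 ∨ s i = -1) (i j : ι) :
    Integrable (fun s : ι → ℝ => s i * s j) σ := by
  refine Integrable.of_bound
    ((measurable_pi_apply i).mul (measurable_pi_apply j)).aestronglyMeasurable 1 ?_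
  filter_upwards [hval] with s hs
  rcases hs i with h | h <;> rcases hs j with h' | h' <;> simp [h, h']

/-- A uniform random sign has mean zero. -/
lemma integral_sign [IsProbabilityMeasure σ]
    (hval : ∀ᵐ s ∂σ, ∀ i, s i = 1 ∨ s i = -1) (huni : ∀ i, σ {s | s i = 1} = 1 / 2) (i : ι) :
    ∫ s, s i ∂σ = 0 := by
  have hae : (fun s : ι → ℝ => s i) =ᵐ[σ]
      fun s => 2 * Set.indicator {s : ι → ℝ | s i = 1} 1 s - 1 := by
    filter_upwards [hval] with s hs
    rcases hs i with h | h <;> norm_num [Set.indicator_apply, h]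
  have hint : Integrable (Set.indicator {s : ι → ℝ | s i = 1} (1 : (ι → ℝ) → ℝ)) σ :=
    (integrable_const 1).indicator (measurableSet_apply_eq i 1)
  rw [integral_congr_ae hae, integral_sub (hint.const_mul 2) (integrable_const 1),
    integral_const_mul, integral_indicator_one (measurableSet_apply_eq i 1), measureReal_def,
    huni]
  simp

/-- Pairwise independent uniform random signs are orthonormal. -/
lemma integral_sign_mul [DecidableEq ι] [IsProbabilityMeasure σ]
    (hval : ∀ᵐ s ∂σ, ∀ i, s i = 1 ∨ s i = -1) (huni : ∀ i, σ {s | s i = 1} = 1 / 2)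
    (hpair : ∀ i j, i ≠ j → σ {s | s i = 1 ∧ s j = 1} = 1 / 4) (i j : ι) :
    ∫ s, s i * s j ∂σ = if i = j then 1 else 0 := by
  split_ifs with hij
  · subst hij
    have hae : (fun s : ι → ℝ => s i * s i) =ᵐ[σ] fun _ => 1 := by
      filter_upwards [hval] with s hs
      rcases hs i with h | h <;> simp [h]
    simp [integral_congr_ae hae]
  · have hmeas : MeasurableSet {s : ι → ℝ | s i = 1 ∧ s j = 1} :=
      (measurableSet_apply_eq i 1).inter (measurableSet_apply_eq j 1)
    have hae : (fun s : ι → ℝ => s i * s j) =ᵐ[σ]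
        fun s => 4 * Set.indicator {s : ι → ℝ | s i = 1 ∧ s j = 1} 1 s - (s i + s j + 1) := by
      filter_upwards [hval] with s hs
      rcases hs i with h | h <;> rcases hs j with h' | h' <;>
        norm_num [Set.indicator_apply, h, h']
    have hint : Integrable (Set.indicator {s : ι → ℝ | s i = 1 ∧ s j = 1} (1 : (ι → ℝ) → ℝ)) σ :=
      (integrable_const 1).indicator hmeas
    have hadd : Integrable (fun s : ι → ℝ => s i + s j) σ :=
      (integrable_sign hval i).add (integrable_sign hval j)
    have hadd_one : Integrable (fun s : ι → ℝ => s i + s j + 1) σ := hadd.add (integrable_const 1)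
    rw [integral_congr_ae hae, integral_sub (hint.const_mul 4) hadd_one,
      integral_add hadd (integrable_const 1),
      integral_add (integrable_sign hval i) (integrable_sign hval j),
      integral_const_mul, integral_indicator_one hmeas, measureReal_def, hpair i j hij,
      integral_sign hval huni, integral_sign hval huni]
    simp

end Signs

/-- If the summands have integral zero and are orthogonal with second moment `c`, then their linear
combinations have integral zero and variance at most `c` times the sum of the squared
coefficients. -/
lemma integral_eq_zero_and_variance_le_of_orthogonal {Ω ι : Type*} [MeasurableSpace Ω]
    [Fintype ι] [DecidableEq ι] {μ : Measure Ω} [IsProbabilityMeasure μ] (F : ι → Ω → ℝ)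
    (a : ι → ℝ) (c : ℝ) (hF : ∀ p, Integrable (F p) μ) (hF₀ : ∀ p, ∫ ω, F p ω ∂μ = 0)
    (hFF : ∀ p q, Integrable (fun ω => F p ω * F q ω) μ)
    (hFF₀ : ∀ p q, ∫ ω, F p ω * F q ω ∂μ = if p = q then c else 0) :
    ∫ ω, ∑ p, a p * F p ω ∂μ = 0 ∧
      variance (fun ω => ∑ p, a p * F p ω) μ ≤ c * ∑ p, a p ^ 2 := by
  have hint : Integrable (fun ω => ∑ p, a p * F p ω) μ :=
    integrable_finsetSum _ fun p _ => (hF p).const_mul (a p)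
  constructor
  · rw [integral_finsetSum _ fun p _ => (hF p).const_mul (a p)]
    simp [integral_const_mul, hF₀]
  · refine (variance_le_expectation_sq hint.aestronglyMeasurable).trans_eq ?_
    have hsq (ω : Ω) : (∑ p, a p * F p ω) ^ 2 = ∑ p, ∑ q, a p * a q * (F p ω * F q ω) := by
      rw [sq, Finset.sum_mul_sum]
      exact Finset.sum_congr rfl fun p _ => Finset.sum_congr rfl fun q _ => by ring
    simp only [Pi.pow_apply, hsq]
    rw [integral_finsetSum _ fun p _ => integrable_finsetSum _ fun q _ =>
      (hFF p q).const_mul (a p * a q)]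
    simp_rw [integral_finsetSum _ fun q _ => (hFF _ q).const_mul (a _ * a q),
      integral_const_mul, hFF₀, mul_ite, mul_zero]
    simp only [Finset.sum_ite_eq, Finset.mem_univ, if_true, Finset.mul_sum]
    exact Finset.sum_congr rfl fun p _ => by ring

section SketchMeasure

variable {n K : ℕ} {σ₁ σ₂ : Measure (Fin n → ℝ)}

lemma integrable_sketchMeasure_mul (f₁ f₂ : (Fin n → Fin K) → ℝ) {u v : (Fin n → ℝ) → ℝ}
    (hu : Integrable u σ₁) (hv : Integrable v σ₂) :
    Integrable (fun ω => f₁ ω.1 * (f₂ ω.2.1 * (u ω.2.2.1 * v ω.2.2.2)))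
      (sketchMeasure n K σ₁ σ₂) :=
  (Integrable.of_finite (f := f₁)).mul_prod
    ((Integrable.of_finite (f := f₂)).mul_prod (hu.mul_prod hv))

lemma integral_sketchMeasure_mul [SFinite σ₁] [SFinite σ₂] (f₁ f₂ : (Fin n → Fin K) → ℝ)
    (u v : (Fin n → ℝ) → ℝ) :
    ∫ ω, f₁ ω.1 * (f₂ ω.2.1 * (u ω.2.2.1 * v ω.2.2.2)) ∂(sketchMeasure n K σ₁ σ₂) =
      (∫ f, f₁ f ∂(uniformOn {f | IsEquip n K f})) *
        ((∫ f, f₂ f ∂(uniformOn {f | IsEquip n K f})) * ((∫ s, u s ∂σ₁) * ∫ s, v s ∂σ₂)) := by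
  rw [← integral_prod_mul u v, ← integral_prod_mul f₂, ← integral_prod_mul f₁, sketchMeasure]

end SketchMeasure

/-- For a fixed `n × n` matrix `A` and a Cartesian sketch built from
independent uniform random equipartitions `P₁, P₂` and random sign functions `s₁, s₂`
whose values are uniform on `{−1,+1}` and pairwise independent, each fixed bucket value
`Cart(A)_{h,g}` has expectation `0` and variance at most `‖A‖_F² / K²`. -/
theorem cart_sketch_mean_variance (n K : ℕ) (hn : 0 < n) (hK : 0 < K) (hdvd : K ∣ n)
    (A : Matrix (Fin n) (Fin n) ℝ)
    (σ₁ σ₂ : Measure (Fin n → ℝ)) [IsProbabilityMeasure σ₁] [IsProbabilityMeasure σ₂]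
    (hval₁ : ∀ᵐ s ∂σ₁, ∀ i, s i = 1 ∨ s i = -1)
    (hval₂ : ∀ᵐ s ∂σ₂, ∀ i, s i = 1 ∨ s i = -1)
    (huni₁ : ∀ i, σ₁ {s | s i = 1} = 1 / 2)
    (huni₂ : ∀ i, σ₂ {s | s i = 1} = 1 / 2)
    (hpair₁ : ∀ i j : Fin n, i ≠ j → ∀ a b : ℝ, (a = 1 ∨ a = -1) → (b = 1 ∨ b = -1) →
      σ₁ {s | s i = a ∧ s j = b} = 1 / 4)
    (hpair₂ : ∀ i j : Fin n, i ≠ j → ∀ a b : ℝ, (a = 1 ∨ a = -1) → (b = 1 ∨ b = -1) →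
      σ₂ {s | s i = a ∧ s j = b} = 1 / 4)
    (h g : Fin K) :
    (∫ ω, cartEntry n K A h g ω ∂(sketchMeasure n K σ₁ σ₂)) = 0 ∧
      variance (cartEntry n K A h g) (sketchMeasure n K σ₁ σ₂) ≤
        (∑ x, ∑ y, A x y ^ 2) / K ^ 2 := by
  have := isProbabilityMeasure_uniformOn_isEquip hK hdvd
  have : IsProbabilityMeasure (sketchMeasure n K σ₁ σ₂) := by
    unfold sketchMeasure
    infer_instance
  let F : Fin n × Fin n →
      (Fin n → Fin K) × (Fin n → Fin K) × (Fin n → ℝ) × (Fin n → ℝ) → ℝ := fun p ω =>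
    (if ω.1 p.1 = h then 1 else 0) *
      ((if ω.2.1 p.2 = g then 1 else 0) * (ω.2.2.1 p.1 * ω.2.2.2 p.2))
  have hmul (p q : Fin n × Fin n) : (fun ω => F p ω * F q ω) = fun ω =>
      ((if ω.1 p.1 = h then 1 else 0) * (if ω.1 q.1 = h then 1 else 0)) *
        (((if ω.2.1 p.2 = g then 1 else 0) * (if ω.2.1 q.2 = g then 1 else 0)) *
          ((ω.2.2.1 p.1 * ω.2.2.1 q.1) * (ω.2.2.2 p.2 * ω.2.2.2 q.2))) := by
    funext ω
    simp only [F]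
    ring
  have hcart : cartEntry n K A h g = fun ω => ∑ p : Fin n × Fin n, A p.1 p.2 * F p ω := by
    funext ω
    rw [cartEntry, Fintype.sum_prod_type]
    refine Finset.sum_congr rfl fun x _ => Finset.sum_congr rfl fun y _ => ?_
    by_cases hx : ω.1 x = h <;> by_cases hy : ω.2.1 y = g <;> simp [F, hx, hy, mul_comm]
  have hmain := integral_eq_zero_and_variance_le_of_orthogonal (μ := sketchMeasure n K σ₁ σ₂) F
    (fun p => A p.1 p.2) (1 / K ^ 2) ?_ ?_ ?_ ?_
  · rw [hcart]
    refine ⟨hmain.1, hmain.2.trans_eq ?_⟩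
    rw [Fintype.sum_prod_type, one_div_mul_eq_div]
  · exact fun p => integrable_sketchMeasure_mul (fun f => if f p.1 = h then 1 else 0)
      (fun f => if f p.2 = g then 1 else 0)
      (integrable_sign hval₁ p.1) (integrable_sign hval₂ p.2)
  · intro p
    refine (integral_sketchMeasure_mul (fun f => if f p.1 = h then 1 else 0)
      (fun f => if f p.2 = g then 1 else 0) (fun s => s p.1) (fun s => s p.2)).trans ?_
    simp [integral_sign hval₁ huni₁]
  · intro p q
    rw [hmul]
    exact integrable_sketchMeasure_mul
      (fun f => (if f p.1 = h then 1 else 0) * (if f q.1 = h then 1 else 0))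
      (fun f => (if f p.2 = g then 1 else 0) * (if f q.2 = g then 1 else 0))
      (integrable_sign_mul hval₁ p.1 q.1) (integrable_sign_mul hval₂ p.2 q.2)
  · intro p q
    rw [hmul, integral_sketchMeasure_mul
        (fun f => (if f p.1 = h then 1 else 0) * (if f q.1 = h then 1 else 0))
        (fun f => (if f p.2 = g then 1 else 0) * (if f q.2 = g then 1 else 0))
        (fun s => s p.1 * s q.1) (fun s => s p.2 * s q.2),
      integral_sign_mul hval₁ huni₁ fun i j hij => hpair₁ i j hij 1 1 (.inl rfl) (.inl rfl),
      integral_sign_mul hval₂ huni₂ fun i j hij => hpair₂ i j hij 1 1 (.inl rfl) (.inl rfl)]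
    by_cases hpq : p = q
    · subst hpq
      have hidem (c : Prop) [Decidable c] :
          (if c then (1 : ℝ) else 0) * (if c then 1 else 0) = if c then 1 else 0 := by
        split_ifs <;> simp
      simp only [hidem, integral_uniformOn_isEquip hK hdvd, if_true]
      ring
    · rw [if_neg hpq]
      by_cases h₁ : p.1 = q.1
      · have h₂ : p.2 ≠ q.2 := fun h₂ => hpq (Prod.ext h₁ h₂)
        simp [h₂]
      · simp [h₁]
end

section
/- Let n, Π be positive integers with Π dividing n and n ≥ 2, let v₁, …, v_n ∈ ℝ^p be unit vectors, let P : {1,…,n} → {1,…,Π} be a uniform random equipartition, and let s₁, …, s_n be mutually independent uniform random signs in {−1,+1}, independent of P. Fix h ∈ {1,…,Π} and set X = ‖Σ_{i : P(i) = h} s_i·v_i‖₂². Then E[X] = n/Π and Var[X] ≤ 4·‖G‖_F²/Π², where G is the n×n Gram matrix with entries G_{i,j} = ⟨v_i, v_j⟩. -/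
open MeasureTheory ProbabilityTheory
open scoped RealInnerProductSpace ENNReal

open Finset

/-- The sign encoded by a Boolean. -/
def boolSign (b : Bool) : ℝ := if b then 1 else -1

lemma boolSign_not (b : Bool) : boolSign (!b) = -boolSign b := by
  cases b <;> simp [boolSign]

lemma boolSign_mul_self (b : Bool) : boolSign b * boolSign b = 1 := by
  cases b <;> simp [boolSign]

section Signs

variable {ι : Type*} [Fintype ι] [DecidableEq ι]

/-- A sum over sign vectors vanishes when the summand is odd in some coordinate. -/
lemma sum_boolSign_mul_eq_zero (i : ι) (g : (ι → Bool) → ℝ)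
    (hg : ∀ ε, g (Function.update ε i (!ε i)) = g ε) :
    ∑ ε : ι → Bool, boolSign (ε i) * g ε = 0 := by
  have hinv : Function.Involutive fun ε : ι → Bool => Function.update ε i (!ε i) := by
    intro ε
    simp
  have hsum := Equiv.sum_comp hinv.toPerm fun ε : ι → Bool => boolSign (ε i) * g ε
  simp only [Function.Involutive.coe_toPerm, hg, Function.update_self, boolSign_not, neg_mul,
    sum_neg_distrib] at hsum
  linarith

lemma sum_boolSign_mul_boolSign (i j : ι) :
    ∑ ε : ι → Bool, boolSign (ε i) * boolSign (ε j) =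
      if i = j then (Fintype.card (ι → Bool) : ℝ) else 0 := by
  split_ifs with hij
  · subst hij
    simp [boolSign_mul_self]
  · refine sum_boolSign_mul_eq_zero i (fun ε => boolSign (ε j)) fun ε => ?_
    rw [Function.update_of_ne (Ne.symm hij)]

/-- Fourth mixed moments of independent signs, for two off-diagonal index pairs. -/
lemma sum_boolSign_four {i j k l : ι} (hij : i ≠ j) (hkl : k ≠ l) :
    ∑ ε : ι → Bool, (boolSign (ε i) * boolSign (ε j)) * (boolSign (ε k) * boolSign (ε l)) =
      (Fintype.card (ι → Bool) : ℝ) *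
        ((if i = k ∧ j = l then 1 else 0) + (if i = l ∧ j = k then 1 else 0)) := by
  by_cases hik : i = k
  · subst hik
    have hterm : ∀ ε : ι → Bool,
        (boolSign (ε i) * boolSign (ε j)) * (boolSign (ε i) * boolSign (ε l)) =
          boolSign (ε j) * boolSign (ε l) := fun ε => by
      linear_combination boolSign (ε j) * boolSign (ε l) * boolSign_mul_self (ε i)
    simp_rw [hterm, sum_boolSign_mul_boolSign]
    simp [hkl]
  by_cases hil : i = l
  · subst hil
    have hterm : ∀ ε : ι → Bool,
        (boolSign (ε i) * boolSign (ε j)) * (boolSign (ε k) * boolSign (ε i)) =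
          boolSign (ε j) * boolSign (ε k) := fun ε => by
      linear_combination boolSign (ε j) * boolSign (ε k) * boolSign_mul_self (ε i)
    simp_rw [hterm, sum_boolSign_mul_boolSign]
    simp [hik]
  simp_rw [mul_assoc (boolSign _) (boolSign _) (_ * _)]
  rw [sum_boolSign_mul_eq_zero i
    (fun ε => boolSign (ε j) * (boolSign (ε k) * boolSign (ε l)))]
  · simp [hik, hil]
  · intro ε
    simp only [Function.update_of_ne (Ne.symm hij), Function.update_of_ne (Ne.symm hik),
      Function.update_of_ne (Ne.symm hil)]

/-- The off-diagonal sign chaos with coefficients `a` has mean zero. -/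
lemma sum_chaos (a : ι → ι → ℝ) (ha : ∀ i, a i i = 0) :
    ∑ ε : ι → Bool, ∑ i, ∑ j, a i j * (boolSign (ε i) * boolSign (ε j)) = 0 := by
  rw [sum_comm]
  refine sum_eq_zero fun i _ => ?_
  rw [sum_comm]
  refine sum_eq_zero fun j _ => ?_
  rw [← mul_sum, sum_boolSign_mul_boolSign]
  split_ifs with hij
  · rw [← hij, ha, zero_mul]
  · rw [mul_zero]

/-- The second moment of the off-diagonal sign chaos with symmetric coefficients `a`. -/
lemma sum_chaos_sq (a : ι → ι → ℝ) (ha : ∀ i, a i i = 0) (hsymm : ∀ i j, a i j = a j i) :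
    ∑ ε : ι → Bool, (∑ i, ∑ j, a i j * (boolSign (ε i) * boolSign (ε j))) ^ 2 =
      (Fintype.card (ι → Bool) : ℝ) * (2 * ∑ i, ∑ j, a i j ^ 2) := by
  have hmoment : ∀ i j k l, ∑ ε : ι → Bool,
      (a i j * (boolSign (ε i) * boolSign (ε j))) * (a k l * (boolSign (ε k) * boolSign (ε l))) =
      (Fintype.card (ι → Bool) : ℝ) * ((if k = i then if l = j then a i j * a k l else 0 else 0) +
        (if k = j then if l = i then a i j * a k l else 0 else 0)) := by
    intro i j k l
    by_cases hij : i = j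
    · simp [hij, ha]
    by_cases hkl : k = l
    · simp [hkl, ha]
    have hfour := sum_boolSign_four hij hkl
    simp_rw [mul_mul_mul_comm (a i j) _ (a k l) _, ← mul_sum, hfour]
    grind
  calc
    _ = ∑ i, ∑ j, ∑ k, ∑ l, ∑ ε : ι → Bool, (a i j * (boolSign (ε i) * boolSign (ε j))) *
          (a k l * (boolSign (ε k) * boolSign (ε l))) := by
      simp_rw [sq, sum_mul, mul_sum]
      rw [sum_comm]
      refine sum_congr rfl fun i _ => ?_
      rw [sum_comm]
      refine sum_congr rfl fun j _ => ?_
      rw [sum_comm]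
      refine sum_congr rfl fun k _ => ?_
      rw [sum_comm]
    _ = _ := by
      simp_rw [hmoment, ← mul_sum, sum_add_distrib]
      simp only [sum_ite_eq', sum_ite_irrel, sum_const_zero, mem_univ, if_true]
      congr 1
      rw [two_mul]
      congr 1
      · simp_rw [sq]
      · refine sum_congr rfl fun i _ => sum_congr rfl fun j _ => ?_
        rw [hsymm j i, sq]

end Signs

section Equipartitions

variable {n K : ℕ}

open Classical in
/-- The finite set of equipartitions of `Fin n` into `K` buckets. -/
noncomputable def equipartitions (n K : ℕ) : Finset (Fin n → Fin K) :=
  univ.filter (IsEquip n K)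

lemma mem_equipartitions {f : Fin n → Fin K} : f ∈ equipartitions n K ↔ IsEquip n K f := by
  simp [equipartitions]

lemma equipartitions_nonempty (hK : 0 < K) (hdvd : K ∣ n) : (equipartitions n K).Nonempty := by
  obtain ⟨m, rfl⟩ := hdvd
  refine ⟨fun i => (finProdFinEquiv.symm i).1, mem_equipartitions.2 fun b => ?_⟩
  rw [Nat.mul_div_cancel_left m hK]
  have hcard : #(univ.filter fun a : Fin (K * m) => (finProdFinEquiv.symm a).1 = b) =
      #({b} ×ˢ (univ : Finset (Fin m))) :=
    card_equiv finProdFinEquiv.symm fun a => by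
      simp only [mem_filter, mem_univ, true_and, mem_product, mem_singleton, and_true]
  rw [hcard, card_product, card_singleton, card_univ, Fintype.card_fin, one_mul]

lemma IsEquip.comp_perm {f : Fin n → Fin K} (hf : IsEquip n K f) (σ : Equiv.Perm (Fin n)) :
    IsEquip n K (f ∘ σ) := by
  intro b
  rw [← hf b]
  exact card_equiv σ (by simp)

lemma IsEquip.sum_ite {f : Fin n → Fin K} (hf : IsEquip n K f) (h : Fin K) :
    ∑ i, (if f i = h then (1 : ℝ) else 0) = (n / K : ℕ) := by
  rw [sum_boole, hf h]

/-- The number of equipartitions sending both `i` and `j` to `h`. -/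
noncomputable def pairCount (h : Fin K) (i j : Fin n) : ℕ :=
  #{f ∈ equipartitions n K | f i = h ∧ f j = h}

lemma pairCount_perm (h : Fin K) (i j : Fin n) (σ : Equiv.Perm (Fin n)) :
    pairCount h (σ i) (σ j) = pairCount h i j := by
  refine card_equiv (Equiv.arrowCongr σ.symm (Equiv.refl _)) fun f => ?_
  simp only [mem_filter, mem_equipartitions, Equiv.arrowCongr_apply, Equiv.symm_symm,
    Equiv.coe_refl, Function.comp_apply, id_eq]
  refine and_congr_left fun _ => ⟨fun hf => hf.comp_perm σ, fun hf => ?_⟩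
  convert hf.comp_perm σ.symm using 1
  ext
  simp

lemma exists_perm_pair {α : Type*} [DecidableEq α] {i j k l : α} (hij : i ≠ j) (hkl : k ≠ l) :
    ∃ σ : Equiv.Perm α, σ i = k ∧ σ j = l := by
  refine ⟨(Equiv.swap i k).trans (Equiv.swap (Equiv.swap i k j) l), ?_, by simp⟩
  simp only [Equiv.trans_apply, Equiv.swap_apply_left]
  refine Equiv.swap_apply_of_ne_of_ne (fun hk => hij ?_) hkl
  exact (Equiv.swap i k).injective (by rw [Equiv.swap_apply_left, ← hk])

lemma sum_pairCount (h : Fin K) :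
    ∑ i : Fin n, ∑ j ∈ univ.erase i, (pairCount h i j : ℝ) =
      #(equipartitions n K) * (((n / K : ℕ) : ℝ) * ((n / K : ℕ) - 1)) := by
  have hpair : ∀ i j : Fin n, (pairCount h i j : ℝ) = ∑ f ∈ equipartitions n K,
      (if f i = h then (1 : ℝ) else 0) * (if f j = h then 1 else 0) := by
    intro i j
    rw [pairCount, ← sum_boole]
    refine sum_congr rfl fun f _ => ?_
    split_ifs <;> simp_all
  calc
    _ = ∑ f ∈ equipartitions n K, ∑ i, ∑ j ∈ univ.erase i,
          (if f i = h then (1 : ℝ) else 0) * (if f j = h then 1 else 0) := by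
      simp_rw [hpair]
      rw [sum_comm]
      refine sum_congr rfl fun i _ => ?_
      rw [sum_comm]
    _ = ∑ f ∈ equipartitions n K, ((n / K : ℕ) : ℝ) * ((n / K : ℕ) - 1) := by
      refine sum_congr rfl fun f hf => ?_
      have hsum := (mem_equipartitions.1 hf).sum_ite h
      simp_rw [← mul_sum, sum_erase_eq_sub (mem_univ _), hsum]
      rw [← hsum, sum_mul]
      refine sum_congr rfl fun i _ => ?_
      split_ifs <;> simp
    _ = _ := by rw [sum_const, nsmul_eq_mul]

/-- Two distinct indices fall in the bucket `h` together with probability at most `1 / K ^ 2`. -/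
lemma pairCount_le (hn : 2 ≤ n) (hK : 0 < K) (hdvd : K ∣ n) (h : Fin K) {i j : Fin n}
    (hij : i ≠ j) : (pairCount h i j : ℝ) ≤ #(equipartitions n K) / (K : ℝ) ^ 2 := by
  have hconst : ∀ k : Fin n, ∀ l ∈ univ.erase k, (pairCount h k l : ℝ) = pairCount h i j := by
    intro k l hl
    obtain ⟨σ, rfl, rfl⟩ := exists_perm_pair hij (ne_of_mem_erase hl).symm
    rw [pairCount_perm]
  have hsum := sum_pairCount (n := n) h
  rw [sum_congr rfl fun k _ => sum_congr rfl (hconst k)] at hsum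
  simp only [sum_const, card_erase_of_mem (mem_univ _), card_univ, Fintype.card_fin, nsmul_eq_mul,
    Nat.cast_sub (show 1 ≤ n by omega), Nat.cast_one] at hsum
  obtain ⟨m, rfl⟩ := hdvd
  rw [Nat.mul_div_cancel_left m hK] at hsum
  have hK1 : (1 : ℝ) ≤ K := by exact_mod_cast hK
  have hKm : (2 : ℝ) ≤ K * m := by exact_mod_cast hn
  have hm : (0 : ℝ) < m := by
    by_contra! hm
    nlinarith
  rw [le_div_iff₀ (by positivity)]
  have hN : (0 : ℝ) ≤ #(equipartitions (K * m) K) := by positivity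
  push_cast at hsum
  have hsum' : (K : ℝ) * (K * m - 1) * pairCount h i j =
      #(equipartitions (K * m) K) * (m - 1) := by
    apply mul_left_cancel₀ hm.ne'
    linarith
  refine le_of_mul_le_mul_left ?_ (show (0 : ℝ) < K * m - 1 by linarith)
  calc
    _ = (K : ℝ) * (#(equipartitions (K * m) K) * (m - 1)) := by rw [← hsum']; ring
    _ ≤ _ := by nlinarith

end Equipartitions

/-- Expectation under the product of the uniform laws on equipartitions and on sign vectors. -/
lemma integral_uniform_equip_prod_signs {n K : ℕ} (hK : 0 < K) (hdvd : K ∣ n)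
    (F : (Fin n → Fin K) × (Fin n → Bool) → ℝ) :
    ∫ ω, F ω ∂((uniformOn {f : Fin n → Fin K | IsEquip n K f}).prod
      (PMF.uniformOfFintype (Fin n → Bool)).toMeasure) =
      (#(equipartitions n K) : ℝ)⁻¹ * ∑ f ∈ equipartitions n K,
        (Fintype.card (Fin n → Bool) : ℝ)⁻¹ * ∑ ε, F (f, ε) := by
  have hset : {f : Fin n → Fin K | IsEquip n K f} = equipartitions n K := by
    ext f
    simp [mem_equipartitions]
  have : IsProbabilityMeasure (uniformOn {f : Fin n → Fin K | IsEquip n K f}) := by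
    rw [hset]
    exact isProbabilityMeasure_uniformOn (Finset.finite_toSet _)
      (equipartitions_nonempty hK hdvd)
  rw [integral_prod _ Integrable.of_finite]
  simp_rw [PMF.integral_eq_sum]
  rw [hset, uniformOn, ProbabilityTheory.cond, integral_smul_measure,
    setIntegral_finset _ Integrable.of_finite.integrableOn]
  simp [mul_sum, Measure.real]

/-- The squared norm of a signed sum of unit vectors over an equipartition bucket, split into
its diagonal and off-diagonal parts. -/
lemma norm_sq_signed_sum_eq {n K : ℕ} {E : Type*} [NormedAddCommGroup E] [InnerProductSpace ℝ E]
    (v : Fin n → E) (hv : ∀ i, ‖v i‖ = 1) (h : Fin K) {f : Fin n → Fin K}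
    (hf : IsEquip n K f) (ε : Fin n → Bool) :
    ‖∑ i ∈ univ.filter fun i => f i = h, boolSign (ε i) • v i‖ ^ 2 = ((n / K : ℕ) : ℝ) +
      ∑ i, ∑ j, (if i ≠ j ∧ f i = h ∧ f j = h then ⟪v i, v j⟫ else 0) *
        (boolSign (ε i) * boolSign (ε j)) := by
  have hdiag : ∑ i, ∑ j, (if i = j then if f i = h then (1 : ℝ) else 0 else 0) =
      (n / K : ℕ) := by
    simp_rw [sum_ite_eq, mem_univ, if_true]
    exact hf.sum_ite h
  rw [← real_inner_self_eq_norm_sq, sum_inner]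
  simp_rw [inner_sum, real_inner_smul_left, real_inner_smul_right, sum_filter]
  rw [← hdiag, ← sum_add_distrib]
  refine sum_congr rfl fun i _ => ?_
  rw [← sum_add_distrib]
  by_cases hi : f i = h
  · rw [if_pos hi]
    refine sum_congr rfl fun j _ => ?_
    by_cases hij : i = j
    · subst hij
      simp [hi, hv, boolSign_mul_self]
    · by_cases hj : f j = h
      · simp only [hi, hj, hij, if_true, if_false, ne_eq, not_false_eq_true, and_self]
        ring
      · simp [hj, hij]
  · simp [hi]

/-- Let `v₁, …, v_n ∈ ℝ^p` be unit vectors, `P : [n] → [K]` a uniform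
random equipartition (`K ∣ n`, `n ≥ 2`) and `s₁, …, s_n` mutually independent uniform
random signs, independent of `P` (modeled by the product of the uniform measure on
equipartitions with the uniform measure on `{−1,+1}^n`, encoded via `Fin n → Bool` with
`true ↦ 1`, `false ↦ −1`; this realizes exactly the stated joint law).  Fix `h`.  For
`X = ‖∑_{i : P i = h} s_i • v_i‖²` we have `E[X] = n/K` and `Var[X] ≤ 4‖G‖_F²/K²`,
where `G` is the Gram matrix `G i j = ⟪v i, v j⟫`. -/
theorem bucket_signed_sum_sq_norm_mean_variance (n K p : ℕ) (hn : 2 ≤ n) (hK : 0 < K)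
    (hdvd : K ∣ n) (v : Fin n → EuclideanSpace ℝ (Fin p)) (hv : ∀ i, ‖v i‖ = 1)
    (G : Matrix (Fin n) (Fin n) ℝ) (hG : ∀ i j, G i j = ⟪v i, v j⟫) (h : Fin K)
    (μ : Measure ((Fin n → Fin K) × (Fin n → Bool)))
    (hμ : μ = (uniformOn {f : Fin n → Fin K | IsEquip n K f}).prod
      (PMF.uniformOfFintype (Fin n → Bool)).toMeasure)
    (X : (Fin n → Fin K) × (Fin n → Bool) → ℝ)
    (hX : X = fun ω =>
      ‖∑ i ∈ Finset.univ.filter fun i => ω.1 i = h,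
          (if ω.2 i then (1 : ℝ) else -1) • v i‖ ^ 2) :
    (∫ ω, X ω ∂μ) = (n : ℝ) / K ∧
      variance X μ ≤ 4 * (∑ i, ∑ j, G i j ^ 2) / K ^ 2 := by
  have hXf : ∀ f ∈ equipartitions n K, ∀ ε, X (f, ε) = ((n / K : ℕ) : ℝ) +
      ∑ i, ∑ j, (if i ≠ j ∧ f i = h ∧ f j = h then G i j else 0) *
        (boolSign (ε i) * boolSign (ε j)) := by
    intro f hf ε
    simp_rw [hX, hG]
    exact norm_sq_signed_sum_eq v hv h (mem_equipartitions.1 hf) ε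
  have hcast : ((n / K : ℕ) : ℝ) = (n : ℝ) / K := Nat.cast_div_charZero hdvd
  have hN : (0 : ℝ) < #(equipartitions n K) := by
    exact_mod_cast (equipartitions_nonempty hK hdvd).card_pos
  have hC : (0 : ℝ) < Fintype.card (Fin n → Bool) := by exact_mod_cast Fintype.card_pos
  have hmean : (∫ ω, X ω ∂μ) = (n : ℝ) / K := by
    rw [hμ, integral_uniform_equip_prod_signs hK hdvd, ← hcast]
    have hinner : ∀ f ∈ equipartitions n K,
        (Fintype.card (Fin n → Bool) : ℝ)⁻¹ * ∑ ε, X (f, ε) = (n / K : ℕ) := by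
      intro f hf
      simp_rw [hXf f hf, sum_add_distrib]
      rw [sum_chaos _ (by simp), sum_const, card_univ, nsmul_eq_mul, add_zero,
        inv_mul_cancel_left₀ hC.ne']
    rw [sum_congr rfl hinner, sum_const, nsmul_eq_mul, inv_mul_cancel_left₀ hN.ne']
  refine ⟨hmean, ?_⟩
  have hGsymm : ∀ i j, G i j = G j i := fun i j => by rw [hG, hG, real_inner_comm]
  have hinner : ∀ f ∈ equipartitions n K,
      (Fintype.card (Fin n → Bool) : ℝ)⁻¹ * ∑ ε, (X (f, ε) - (n : ℝ) / K) ^ 2 =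
        2 * ∑ i, ∑ j, if i ≠ j ∧ f i = h ∧ f j = h then G i j ^ 2 else 0 := by
    intro f hf
    simp_rw [hXf f hf, hcast, add_sub_cancel_left]
    rw [sum_chaos_sq _ (by simp) (by intro i j; rw [hGsymm i j]; congr 1; grind),
      inv_mul_cancel_left₀ hC.ne']
    simp [ite_pow]
  have hpair : ∀ i j, ∑ f ∈ equipartitions n K,
      (if i ≠ j ∧ f i = h ∧ f j = h then G i j ^ 2 else 0) ≤
        #(equipartitions n K) / (K : ℝ) ^ 2 * G i j ^ 2 := by
    intro i j
    by_cases hij : i = j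
    · simp only [hij, ne_eq, not_true_eq_false, false_and, if_false, sum_const_zero]
      positivity
    · simp only [ne_eq, hij, not_false_eq_true, true_and]
      rw [← sum_filter, sum_const, nsmul_eq_mul]
      exact mul_le_mul_of_nonneg_right (pairCount_le hn hK hdvd h hij) (sq_nonneg _)
  rw [variance_eq_integral (Measurable.of_discrete).aemeasurable, hmean, hμ,
    integral_uniform_equip_prod_signs hK hdvd, sum_congr rfl hinner, ← mul_sum, sum_comm]
  simp_rw [sum_comm (s := equipartitions n K)]
  rw [inv_mul_le_iff₀ hN]
  have hbound := sum_le_sum fun i (_ : i ∈ univ) => sum_le_sum fun j (_ : j ∈ univ) => hpair i j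
  simp_rw [← mul_sum] at hbound
  have hnonneg : 0 ≤ #(equipartitions n K) / (K : ℝ) ^ 2 * ∑ i, ∑ j, G i j ^ 2 := by positivity
  calc
    _ ≤ 2 * (#(equipartitions n K) / (K : ℝ) ^ 2 * ∑ i, ∑ j, G i j ^ 2) := by gcongr
    _ ≤ 4 * (#(equipartitions n K) / (K : ℝ) ^ 2 * ∑ i, ∑ j, G i j ^ 2) := by linarith
    _ = _ := by ring
end
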